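/- For every integer w, all integers p1, p2, and every nonnegative integer u, one has G00(w,u;p1,p2) = H(u;p1,p2); in particular G00(w,u;p1,p2) does not depend on w. -/

import Mathlib

open Finset

noncomputable section

/-- The field `ℚ(q)` of rational functions over `ℚ`. -/
abbrev F : Type := RatFunc ℚ

/-- The indeterminate `q`. -/
noncomputable def qq : F := RatFunc.X

/-- The quantum integer `[n]` with base `v`: `(v^n - v^(-n))/(v - v⁻¹)`. -/
noncomputable def qint (v : F) (n : ℤ) : F := (v ^ n - v ^ (-n)) / (v - v⁻¹)

/-- The quantum factorial `[m]! = [1][2]⋯[m]` with base `v`. -/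
noncomputable def qfact (v : F) (m : ℕ) : F := ∏ k ∈ range m, qint v ((k : ℤ) + 1)

/-- The quantum binomial coefficient `C_v(n,d) = [n][n-1]⋯[n-d+1]/[d]!` for `d ≥ 0`,
and `0` for `d < 0`. -/
noncomputable def qbinom (v : F) (n d : ℤ) : F :=
  if d < 0 then 0
  else (∏ k ∈ range d.toNat, qint v (n - (k : ℤ))) / qfact v d.toNat

/-- The function `G(w,u,ℓ;p0,p1,p2)` of [CLW, (5.1)]. -/
noncomputable def G (w : ℤ) (u ℓ : ℕ) (p0 p1 p2 : ℤ) : F :=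
  (-1 : F) ^ w * qq ^ ((u : ℤ) ^ 2 - w * (u : ℤ) + (ℓ : ℤ) * (u : ℤ)) *
  ((∑ c ∈ range (u + 1), ∑ e ∈ range (u + 1 - c), ∑ t ∈ range (ℓ + 1),
      (let r : ℕ := u - c - e;
       if Even ((t : ℤ) + w - (r : ℤ)) then
         qq ^ (-(t : ℤ) * ((ℓ : ℤ) + (u : ℤ) - 1) - (u : ℤ) * ((c : ℤ) + (e : ℤ)) + 2 * (c : ℤ)
               + (r : ℤ) * p0 + 2 * (c : ℤ) * p1 + 2 * (e : ℤ) * p2)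
           * qbinom qq (ℓ : ℤ) (t : ℤ) * qbinom qq (w + (t : ℤ) + p0) (r : ℤ)
           * qbinom (qq ^ 2) ((w + (t : ℤ) - (r : ℤ)) / 2 + p1) (c : ℤ)
           * qbinom (qq ^ 2) ((w + (t : ℤ) - (r : ℤ)) / 2 + p2) (e : ℤ)
       else 0))
  - (∑ c ∈ range (u + 1), ∑ e ∈ range (u + 1 - c), ∑ t ∈ range (ℓ + 1),
      (let r : ℕ := u - c - e;
       if ¬ Even ((t : ℤ) + w - (r : ℤ)) then
         qq ^ (-(t : ℤ) * ((ℓ : ℤ) + (u : ℤ) - 1) - ((u : ℤ) - 1) * ((c : ℤ) + (e : ℤ))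
               + (r : ℤ) * p0 + 2 * (c : ℤ) * p1 + 2 * (e : ℤ) * p2)
           * qbinom qq (ℓ : ℤ) (t : ℤ) * qbinom qq (w + (t : ℤ) + p0) (r : ℤ)
           * qbinom (qq ^ 2) (1 + (w + (t : ℤ) - (r : ℤ) - 1) / 2 + p1) (c : ℤ)
           * qbinom (qq ^ 2) ((w + (t : ℤ) - (r : ℤ) - 1) / 2 + p2) (e : ℤ)
       else 0)))

/-- The function `H(u;p1,p2)` of [CLW, (5.9)]. -/
noncomputable def H (u : ℕ) (p1 p2 : ℤ) : F :=
  ∑ c ∈ range (u + 1),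
    (let e : ℕ := u - c;
     qq ^ (2 * (c : ℤ) + 2 * (c : ℤ) * p1 + 2 * (e : ℤ) * p2)
       * qbinom (qq ^ 2) p1 (c : ℤ) * qbinom (qq ^ 2) p2 (e : ℤ))

/-- The specialization `G₀₀(w,u;p1,p2) := G(w,u,0;0,p1,p2)`. -/
noncomputable def G00 (w : ℤ) (u : ℕ) (p1 p2 : ℤ) : F := G w u 0 0 p1 p2

lemma qq_ne : qq ≠ 0 := RatFunc.X_ne_zero

lemma qq_pow_ne (n : ℕ) (hn : 0 < n) : qq ^ n ≠ 1 := by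
  intro h
  have h2 : algebraMap (Polynomial ℚ) (RatFunc ℚ) (Polynomial.X ^ n) =
      algebraMap (Polynomial ℚ) (RatFunc ℚ) 1 := by
    rw [map_pow, RatFunc.algebraMap_X, map_one]; exact h
  have h3 := RatFunc.algebraMap_injective ℚ h2
  have h4 := congrArg Polynomial.natDegree h3
  simp at h4
  omega

/-- Nondegenerate base. -/
def Good (v : F) : Prop := v ≠ 0 ∧ ∀ n : ℕ, 0 < n → v ^ n ≠ 1

lemma good_qq : Good qq := ⟨qq_ne, qq_pow_ne⟩

lemma good_qq2 : Good (qq ^ 2) := by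
  refine ⟨pow_ne_zero _ qq_ne, fun n hn => ?_⟩
  rw [← pow_mul]
  exact qq_pow_ne _ (by omega)

lemma Good.sub_ne {v : F} (hv : Good v) (n : ℕ) (hn : 0 < n) :
    v ^ (n : ℤ) - v ^ (-(n : ℤ)) ≠ 0 := by
  intro h
  have h0 := hv.1
  have h2 := hv.2 (n + n) (by omega)
  apply h2
  rw [zpow_neg, zpow_natCast] at h
  have h3 : v ^ n ≠ 0 := pow_ne_zero _ h0
  field_simp at h
  rw [pow_add]
  linear_combination h

lemma Good.den_ne {v : F} (hv : Good v) : v - v⁻¹ ≠ 0 := by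
  have := hv.sub_ne 1 one_pos
  simpa using this

lemma Good.qint_ne {v : F} (hv : Good v) (k : ℕ) : qint v ((k : ℤ) + 1) ≠ 0 := by
  unfold qint
  have := hv.sub_ne (k + 1) (by omega)
  push_cast at this
  exact div_ne_zero this hv.den_ne

lemma Good.qfact_ne {v : F} (hv : Good v) (k : ℕ) : qfact v k ≠ 0 :=
  Finset.prod_ne_zero_iff.2 fun i _ => hv.qint_ne i

lemma qbinom_nat (v : F) (n : ℤ) (d : ℕ) :
    qbinom v n (d : ℤ) = (∏ k ∈ range d, qint v (n - (k : ℤ))) / qfact v d := by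
  unfold qbinom
  rw [if_neg (by omega)]
  simp

lemma qbinom_zero (v : F) (n : ℤ) : qbinom v n ((0 : ℕ) : ℤ) = 1 := by
  rw [qbinom_nat]; simp [qfact]

lemma Good.succ_right {v : F} (hv : Good v) (n : ℤ) (d : ℕ) :
    qbinom v n ((d + 1 : ℕ) : ℤ) * qint v ((d : ℤ) + 1)
      = qbinom v n (d : ℤ) * qint v (n - d) := by
  have h1 := hv.qint_ne d
  have h2 := hv.qfact_ne d
  rw [qbinom_nat, qbinom_nat, Finset.prod_range_succ]
  have : qfact v (d + 1) = qfact v d * qint v ((d : ℤ) + 1) := by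
    unfold qfact; rw [Finset.prod_range_succ]
  rw [this]
  field_simp

lemma Good.succ_both {v : F} (hv : Good v) (n : ℤ) (d : ℕ) :
    qbinom v (n + 1) ((d + 1 : ℕ) : ℤ) * qint v ((d : ℤ) + 1)
      = qbinom v n (d : ℤ) * qint v (n + 1) := by
  have h1 := hv.qint_ne d
  have h2 := hv.qfact_ne d
  rw [qbinom_nat, qbinom_nat, Finset.prod_range_succ']
  have : qfact v (d + 1) = qfact v d * qint v ((d : ℤ) + 1) := by
    unfold qfact; rw [Finset.prod_range_succ]
  rw [this]
  have h3 : ∀ k : ℕ, n + 1 - ((k + 1 : ℕ) : ℤ) = n - k := by intro k; push_cast; ring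
  simp only [h3]
  simp only [Nat.cast_zero, sub_zero]
  field_simp

lemma Good.pascal {v : F} (hv : Good v) (n : ℤ) (d : ℕ) :
    qbinom v (n + 1) ((d + 1 : ℕ) : ℤ)
      = v ^ ((d : ℤ) + 1) * qbinom v n ((d + 1 : ℕ) : ℤ)
        + v ^ (-(n - d)) * qbinom v n (d : ℤ) := by
  have h0 := hv.1
  have h1 := hv.qint_ne d
  apply mul_right_cancel₀ h1
  rw [hv.succ_both, add_mul, mul_assoc, hv.succ_right]
  have key : qint v (n + 1) = v ^ ((d : ℤ) + 1) * qint v (n - d)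
      + v ^ (-(n - d)) * qint v ((d : ℤ) + 1) := by
    unfold qint
    have e1 : v ^ (n + 1) = v ^ ((d : ℤ) + 1) * v ^ (n - d) := by
      rw [← zpow_add₀ h0]; congr 1; ring
    have e2 : v ^ (-(n + 1)) = v ^ (-((d : ℤ) + 1)) * v ^ (-(n - d)) := by
      rw [← zpow_add₀ h0]; congr 1; ring
    rw [e1, e2]
    ring
  rw [key]; ring

/-- Normalised binomials. -/
def Bn (a : ℤ) (c : ℕ) : F := qq ^ (2 * (c : ℤ) * a) * qbinom (qq ^ 2) a (c : ℤ)

lemma Bn_zero (a : ℤ) : Bn a 0 = 1 := by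
  unfold Bn; rw [qbinom_zero]; simp

lemma qq2_zpow (n : ℤ) : (qq ^ 2) ^ n = qq ^ (2 * n) := by
  rw [zpow_mul]; norm_cast

lemma Bn_succ (a : ℤ) (c : ℕ) :
    Bn (a + 1) (c + 1) = qq ^ (4 * ((c : ℤ) + 1)) * Bn a (c + 1)
      + qq ^ (4 * (c : ℤ) + 2) * Bn a c := by
  have h0 := qq_ne
  unfold Bn
  rw [good_qq2.pascal, qq2_zpow, qq2_zpow, mul_add]
  simp only [← mul_assoc, ← zpow_add₀ h0]
  push_cast
  ring_nf

lemma H_eq (u : ℕ) (a b : ℤ) : H u a b =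
    ∑ c ∈ range (u + 1), qq ^ (2 * (c : ℤ)) * Bn a c * Bn b (u - c) := by
  have h0 := qq_ne
  unfold H Bn
  apply Finset.sum_congr rfl
  intro c _
  simp only [zpow_add₀ h0]
  ring

lemma H_eq' (u : ℕ) (a b : ℤ) : H u a b =
    ∑ e ∈ range (u + 1), qq ^ (2 * ((u : ℤ) - e)) * Bn a (u - e) * Bn b e := by
  rw [H_eq, ← Finset.sum_range_reflect]
  apply Finset.sum_congr rfl
  intro e he
  have he : e ≤ u := by simpa [Nat.lt_succ_iff] using he
  have e1 : u + 1 - 1 - e = u - e := by omega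
  have e2 : u - (u - e) = e := by omega
  rw [e1, e2]
  push_cast [he]
  rfl

lemma H_zero (a b : ℤ) : H 0 a b = 1 := by
  rw [H_eq]; simp [Bn_zero]

lemma H_step (u : ℕ) (a b : ℤ) :
    qq ^ (-2 * ((u : ℤ) + 1)) * H (u + 1) b (a + 1) = H (u + 1) a b + H u a b := by
  have h0 := qq_ne
  rw [H_eq' (u + 1) b, H_eq (u + 1), H_eq u]
  rw [Finset.sum_range_succ', Finset.sum_range_succ' _ (u + 1)]
  have hs : ∀ e ∈ range (u + 1), qq ^ (-2 * ((u : ℤ) + 1)) *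
      (qq ^ (2 * (((u + 1 : ℕ) : ℤ) - ((e + 1 : ℕ) : ℤ))) * Bn b (u + 1 - (e + 1))
        * Bn (a + 1) (e + 1)) =
      qq ^ (2 * ((e + 1 : ℕ) : ℤ)) * Bn a (e + 1) * Bn b (u + 1 - (e + 1))
        + qq ^ (2 * (e : ℤ)) * Bn a e * Bn b (u - e) := by
    intro e _
    rw [Bn_succ, Nat.add_sub_add_right]
    have e1 : qq ^ (2 * ((e + 1 : ℕ) : ℤ)) = qq ^ (-2 * ((u : ℤ) + 1)) *
      qq ^ (2 * (((u + 1 : ℕ) : ℤ) - ((e + 1 : ℕ) : ℤ))) * qq ^ (4 * ((e : ℤ) + 1)) := by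
      simp only [← zpow_add₀ h0]; congr 1; push_cast; ring
    have e2 : qq ^ (2 * (e : ℤ)) = qq ^ (-2 * ((u : ℤ) + 1)) *
      qq ^ (2 * (((u + 1 : ℕ) : ℤ) - ((e + 1 : ℕ) : ℤ))) * qq ^ (4 * (e : ℤ) + 2) := by
      simp only [← zpow_add₀ h0]; congr 1; push_cast; ring
    rw [e1, e2]; ring
  rw [mul_add, Finset.mul_sum, Finset.sum_congr rfl hs, Finset.sum_add_distrib]
  have e3 : qq ^ (-2 * ((u : ℤ) + 1)) * qq ^ (2 * (((u + 1 : ℕ) : ℤ) - ((0 : ℕ) : ℤ))) = 1 := by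
    simp only [← zpow_add₀ h0]
    rw [show -2 * ((u : ℤ) + 1) + 2 * (((u + 1 : ℕ) : ℤ) - ((0 : ℕ) : ℤ)) = 0 by
      push_cast; ring, zpow_zero]
  simp only [Bn_zero, Nat.sub_zero]
  rw [← mul_assoc, ← mul_assoc, e3]
  simp
  ring

/-- Interlaced sequence of parameters. -/
def tt (p1 p2 n : ℤ) : ℤ := if Even n then p1 + n / 2 else p2 + n / 2

lemma tt_two (p1 p2 n : ℤ) : tt p1 p2 (n + 1 + 1) = tt p1 p2 n + 1 := by
  unfold tt
  have : Even (n + 1 + 1) ↔ Even n := by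
    rw [Int.even_iff, Int.even_iff]; omega
  simp only [this]
  split_ifs <;> omega

def hh (p1 p2 n : ℤ) (m : ℕ) : F :=
  qq ^ (-2 * n * (m : ℤ)) * H m (tt p1 p2 n) (tt p1 p2 (n + 1))

lemma hh_zero (p1 p2 n : ℤ) : hh p1 p2 n 0 = 1 := by
  unfold hh; rw [H_zero]; simp

lemma hh_succ (p1 p2 n : ℤ) (m : ℕ) :
    hh p1 p2 (n + 1) (m + 1) = hh p1 p2 n (m + 1) + qq ^ (-2 * n) * hh p1 p2 n m := by
  have h0 := qq_ne
  unfold hh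
  rw [tt_two]
  have h := H_step m (tt p1 p2 n) (tt p1 p2 (n + 1))
  have e1 : qq ^ (-2 * (n + 1) * ((m + 1 : ℕ) : ℤ)) =
      qq ^ (-2 * n * ((m + 1 : ℕ) : ℤ)) * qq ^ (-2 * ((m : ℤ) + 1)) := by
    simp only [← zpow_add₀ h0]; congr 1; push_cast; ring
  have e2 : qq ^ (-2 * n) * qq ^ (-2 * n * (m : ℤ)) = qq ^ (-2 * n * ((m + 1 : ℕ) : ℤ)) := by
    simp only [← zpow_add₀ h0]; congr 1; push_cast; ring
  rw [e1, ← mul_assoc, e2, mul_assoc, h]; ring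

def AA (w : ℤ) (r : ℕ) : F := (-1) ^ r * qq ^ ((r : ℤ) ^ 2 - r * w) * qbinom qq w (r : ℤ)

lemma AA_zero (w : ℤ) : AA w 0 = 1 := by
  unfold AA; rw [qbinom_zero]; simp

lemma AA_succ (w : ℤ) (r : ℕ) :
    AA (w + 1) (r + 1) = AA w (r + 1) - qq ^ (-2 * (w - r)) * AA w r := by
  have h0 := qq_ne
  unfold AA
  rw [good_qq.pascal]
  have e1 : qq ^ (((r + 1 : ℕ) : ℤ) ^ 2 - ((r + 1 : ℕ) : ℤ) * w) =
     qq ^ (((r + 1 : ℕ) : ℤ) ^ 2 - ((r + 1 : ℕ) : ℤ) * (w + 1)) * qq ^ ((r : ℤ) + 1) := by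
    simp only [← zpow_add₀ h0]; congr 1; push_cast; ring
  have e2 : qq ^ (-2 * (w - r)) * qq ^ ((r : ℤ) ^ 2 - r * w) =
     qq ^ (((r + 1 : ℕ) : ℤ) ^ 2 - ((r + 1 : ℕ) : ℤ) * (w + 1)) * qq ^ (-(w - (r : ℤ))) := by
    simp only [← zpow_add₀ h0]; congr 1; push_cast; ring
  rw [e1]
  linear_combination (-1) ^ r * qbinom qq w r * e2

def KK (p1 p2 w : ℤ) (u : ℕ) : F := ∑ r ∈ range (u + 1), AA w r * hh p1 p2 (w - r) (u - r)

lemma KK_succ (p1 p2 w : ℤ) (u : ℕ) : KK p1 p2 (w + 1) u = KK p1 p2 w u := by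
  unfold KK
  cases u with
  | zero => simp [AA_zero, hh_zero]
  | succ u =>
    have s1 : ∑ r ∈ range (u + 1 + 1), AA (w + 1) r * hh p1 p2 (w + 1 - r) (u + 1 - r)
        = ∑ r ∈ range (u + 1 + 1), AA w r * hh p1 p2 (w + 1 - r) (u + 1 - r)
          - ∑ r ∈ range (u + 1), qq ^ (-2 * (w - r)) * AA w r * hh p1 p2 (w - r) (u - r) := by
      rw [Finset.sum_range_succ', Finset.sum_range_succ' _ (u + 1), AA_zero, AA_zero,
        add_sub_right_comm (∑ k ∈ range (u + 1), _ : F), ← Finset.sum_sub_distrib]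
      congr 1
      apply Finset.sum_congr rfl
      intro r _
      rw [AA_succ, Nat.add_sub_add_right,
        show w + 1 - ((r + 1 : ℕ) : ℤ) = w - r by push_cast; ring]
      ring
    rw [s1, Finset.sum_range_succ, Finset.sum_range_succ _ (u + 1), Nat.sub_self,
      hh_zero, hh_zero, add_sub_right_comm, ← Finset.sum_sub_distrib]
    congr 1
    apply Finset.sum_congr rfl
    intro r hr
    have hr : r ≤ u := by simpa [Nat.lt_succ_iff] using hr
    rw [show u + 1 - r = (u - r) + 1 by omega, show w + 1 - (r : ℤ) = (w - r) + 1 by ring,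
      hh_succ]
    ring

lemma AA_zero_left (r : ℕ) : AA 0 (r + 1) = 0 := by
  unfold AA
  rw [qbinom_nat, Finset.prod_range_succ']
  simp [qint]

lemma KK_eq (p1 p2 w : ℤ) (u : ℕ) : KK p1 p2 w u = H u p1 p2 := by
  have h0 : KK p1 p2 0 u = H u p1 p2 := by
    unfold KK
    rw [Finset.sum_range_succ']
    simp [AA_zero, AA_zero_left, hh, tt]
  induction w using Int.induction_on with
  | zero => exact h0
  | succ i ih => rw [KK_succ, ih]
  | pred i ih => rw [← KK_succ, sub_add_cancel, ih]

lemma sum_reorg (u : ℕ) (f : ℕ → ℕ → F) :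
    ∑ c ∈ range (u + 1), ∑ e ∈ range (u + 1 - c), f c e =
      ∑ r ∈ range (u + 1), ∑ c ∈ range (u - r + 1), f c (u - r - c) := by
  rw [Finset.sum_sigma', Finset.sum_sigma']
  refine Finset.sum_bij' (fun x _ => ⟨u - x.1 - x.2, x.1⟩) (fun x _ => ⟨x.2, u - x.1 - x.2⟩)
    ?_ ?_ ?_ ?_ ?_
  · rintro ⟨c, e⟩ h
    simp only [Finset.mem_sigma, Finset.mem_range] at h ⊢
    omega
  · rintro ⟨c, e⟩ h
    simp only [Finset.mem_sigma, Finset.mem_range] at h ⊢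
    omega
  · rintro ⟨c, e⟩ h
    simp only [Finset.mem_sigma, Finset.mem_range] at h
    have : u - (u - c - e) - c = e := by omega
    simp [this]
  · rintro ⟨c, e⟩ h
    simp only [Finset.mem_sigma, Finset.mem_range] at h
    have : u - e - (u - c - e) = c := by omega
    simp [this]
  · rintro ⟨c, e⟩ h
    simp only [Finset.mem_sigma, Finset.mem_range] at h
    have : u - (u - c - e) - c = e := by omega
    simp [this]

lemma G00_eq_KK (w : ℤ) (u : ℕ) (p1 p2 : ℤ) : G00 w u p1 p2 = KK p1 p2 w u := by
  have h0 := qq_ne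
  have hm : ((-1 : F)) ≠ 0 := by simp
  unfold G00 G
  rw [← Finset.sum_sub_distrib]
  simp only [← Finset.sum_sub_distrib, zero_add, Finset.sum_range_one]
  rw [sum_reorg, Finset.mul_sum]
  unfold KK
  apply Finset.sum_congr rfl
  intro r hr
  have hr : r ≤ u := by simpa [Nat.lt_succ_iff] using hr
  have hsgn : ∀ n : ℤ, Even n → w - r = n → (-1 : F) ^ w = (-1) ^ r := by
    intro n hn hwr
    rw [show w = n + r by omega, zpow_add₀ hm, hn.neg_one_zpow]; simp
  have hsgn' : ∀ n : ℤ, ¬ Even n → w - r = n → (-1 : F) ^ w = - (-1) ^ r := by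
    intro n hn hwr
    rw [show w = n + r by omega, zpow_add₀ hm, (Int.not_even_iff_odd.1 hn).neg_one_zpow]; simp
  unfold hh AA
  by_cases hev : Even (w - r)
  · rw [hsgn _ hev rfl]
    obtain ⟨k, hk⟩ := hev
    have t1 : tt p1 p2 (w - r) = k + p1 := by
      unfold tt; rw [if_pos ⟨k, hk⟩]; omega
    have t2 : tt p1 p2 (w - r + 1) = k + p2 := by
      unfold tt; rw [if_neg (by rw [Int.even_iff]; omega)]; omega
    rw [t1, t2, H_eq, Finset.mul_sum, Finset.mul_sum, Finset.mul_sum]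
    apply Finset.sum_congr rfl
    intro c hc
    have hc : c ≤ u - r := by simpa [Nat.lt_succ_iff] using hc
    rw [show u - c - (u - r - c) = r by omega]
    have hev' : Even (((0 : ℕ) : ℤ) + w - r) := ⟨k, by push_cast; omega⟩
    rw [if_pos hev', if_neg (not_not.2 hev')]
    rw [show (w + ((0 : ℕ) : ℤ) - r) / 2 = k by push_cast; omega]
    rw [show w + ((0 : ℕ) : ℤ) + 0 = w by push_cast; ring]
    unfold Bn
    rw [qbinom_zero]
    have hw : w = k + k + r := by omega
    obtain ⟨e, he⟩ : ∃ e, u = c + e + r := ⟨u - r - c, by omega⟩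
    rw [show u - r - c = e by omega, show u - r = c + e by omega]
    have e1 : qq ^ ((u : ℤ) ^ 2 - w * u + ((0 : ℕ) : ℤ) * u) *
      qq ^ (-((0 : ℕ) : ℤ) * (((0 : ℕ) : ℤ) + (u : ℤ) - 1) - (u : ℤ) * ((c : ℤ) + (e : ℤ)) + 2 * (c : ℤ)
               + (r : ℤ) * 0 + 2 * (c : ℤ) * p1 + 2 * (e : ℤ) * p2) =
      qq ^ ((r : ℤ) ^ 2 - r * w) * qq ^ (-2 * (w - r) * ((c + e : ℕ) : ℤ)) * qq ^ (2 * (c : ℤ))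
        * qq ^ (2 * (c : ℤ) * (k + p1)) * qq ^ (2 * (e : ℤ) * (k + p2)) := by
      simp only [← zpow_add₀ h0]; congr 1; rw [he, hw]; push_cast; ring
    linear_combination (-1) ^ r * qbinom qq w r * qbinom (qq ^ 2) (k + p1) c
      * qbinom (qq ^ 2) (k + p2) e * e1
  · rw [hsgn' _ hev rfl]
    obtain ⟨k, hk⟩ := Int.not_even_iff_odd.1 hev
    have t1 : tt p1 p2 (w - r) = k + p2 := by
      unfold tt; rw [if_neg hev]; omega
    have t2 : tt p1 p2 (w - r + 1) = 1 + k + p1 := by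
      unfold tt; rw [if_pos (by rw [Int.even_iff]; omega)]; omega
    rw [t1, t2, H_eq', Finset.mul_sum, Finset.mul_sum, Finset.mul_sum]
    apply Finset.sum_congr rfl
    intro c hc
    have hc : c ≤ u - r := by simpa [Nat.lt_succ_iff] using hc
    rw [show u - c - (u - r - c) = r by omega]
    have hev' : ¬ Even (((0 : ℕ) : ℤ) + w - r) := by
      rw [Int.even_iff]; push_cast; omega
    rw [if_neg hev', if_pos hev']
    rw [show (w + ((0 : ℕ) : ℤ) - r - 1) / 2 = k by push_cast; omega]
    rw [show w + ((0 : ℕ) : ℤ) + 0 = w by push_cast; ring]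
    unfold Bn
    rw [qbinom_zero]
    have hw : w = 2 * k + 1 + r := by omega
    obtain ⟨e, he⟩ : ∃ e, u = c + e + r := ⟨u - r - c, by omega⟩
    rw [show u - r - c = e by omega, show u - r = c + e by omega]
    have e1 : qq ^ ((u : ℤ) ^ 2 - w * u + ((0 : ℕ) : ℤ) * u) *
      qq ^ (-((0 : ℕ) : ℤ) * (((0 : ℕ) : ℤ) + (u : ℤ) - 1) - ((u : ℤ) - 1) * ((c : ℤ) + (e : ℤ))
               + (r : ℤ) * 0 + 2 * (c : ℤ) * p1 + 2 * (e : ℤ) * p2) =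
      qq ^ ((r : ℤ) ^ 2 - r * w) * qq ^ (-2 * (w - r) * ((c + e : ℕ) : ℤ))
        * qq ^ (2 * (((c + e : ℕ) : ℤ) - c))
        * qq ^ (2 * (c : ℤ) * (1 + k + p1)) * qq ^ (2 * (e : ℤ) * (k + p2)) := by
      simp only [← zpow_add₀ h0]; congr 1; rw [he, hw]; push_cast; ring
    linear_combination (-1) ^ r * qbinom qq w r * qbinom (qq ^ 2) (1 + k + p1) c
      * qbinom (qq ^ 2) (k + p2) e * e1

/-- `G₀₀(w,u;p1,p2) = H(u;p1,p2)`; in particular `G₀₀(w,u;p1,p2)` is independent of `w`. -/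
theorem G00_eq_H (w : ℤ) (p1 p2 : ℤ) (u : ℕ) : G00 w u p1 p2 = H u p1 p2 := by
  rw [G00_eq_KK, KK_eq]

end
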